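/- Suppose n = m. For any two-sided strategy-proof randomized matching mechanism f, there exists a randomized matching mechanism g that is two-sided strategy-proof and symmetric and satisfies Σ_{≻∈P} V(g(≻),≻) ≤ Σ_{≻∈P} V(f(≻),≻), where V(r,≻) denotes the stability violation of r at profile ≻. -/

import Mathlib

/-!
The mirror image of a mechanism runs it on the role-swapped profile and transposes the outcome.
Mirroring preserves feasibility and two-sided strategy-proofness, because the requirements on the
two sides of the market trade places, and it preserves the total violation, because role swapping
permutes the profiles. Flip a fair coin between `f` and its mirror image; the result is symmetric
because role swapping is an involution. Feasibility and strategy-proofness are linear inequalities,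
so they survive; the total violation is a sum of maxima of affine functions, hence convex, so it is
at most the common value at the two endpoints.
-/

open Finset

/-- A preference profile: each student `s` has a ranking `p.1 s : Equiv.Perm (Fin m)`
(where `p.1 s c` is the rank student `s` gives to school `c`, lower rank = more preferred),
and each school `c` has a ranking `p.2 c` of the students (lower rank = more preferred). -/
abbrev Profile (n m : ℕ) :=
  (Fin n → Equiv.Perm (Fin m)) × (Fin m → Equiv.Perm (Fin n))

/-- A randomized matching: nonnegative entries, and (accounting for the implicit `∅`
row/column each summing to one) every row and column sums to at most one. -/
def IsRandMatching {n m : ℕ} (r : Fin n → Fin m → ℝ) : Prop :=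
  (∀ s c, 0 ≤ r s c) ∧ (∀ s, ∑ c, r s c ≤ 1) ∧ (∀ c, ∑ s, r s c ≤ 1)

/-- Stability violation of a randomized matching `r` at profile `p`. -/
def violation {n m : ℕ} (p : Profile n m) (r : Fin n → Fin m → ℝ) : ℝ :=
  ∑ s, ∑ c,
    max (1 - r s c
      - ∑ c' ∈ univ.filter (fun c' => p.1 s c' < p.1 s c), r s c'
      - ∑ s' ∈ univ.filter (fun s' => p.2 c s' < p.2 c s), r s' c) 0

/-- Two-sided strategy-proofness of a randomized matching mechanism. -/
def TwoSidedSP {n m : ℕ} (g : Profile n m → Fin n → Fin m → ℝ) : Prop :=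
  (∀ p : Profile n m, ∀ s : Fin n, ∀ q : Equiv.Perm (Fin m), ∀ c : Fin m,
    ∑ c' ∈ univ.filter (fun c' => p.1 s c' ≤ p.1 s c),
        g (Function.update p.1 s q, p.2) s c'
      ≤ ∑ c' ∈ univ.filter (fun c' => p.1 s c' ≤ p.1 s c), g p s c') ∧
  (∀ p : Profile n m, ∀ c : Fin m, ∀ q : Equiv.Perm (Fin n), ∀ s : Fin n,
    ∑ s' ∈ univ.filter (fun s' => p.2 c s' ≤ p.2 c s),
        g (p.1, Function.update p.2 c q) s' c
      ≤ ∑ s' ∈ univ.filter (fun s' => p.2 c s' ≤ p.2 c s), g p s' c)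

/-- The relabelled profile `≻^π`: student `πS s` gets student `s`'s old preference with
schools renamed by `πC`, and school `πC c` gets school `c`'s old preference with students
renamed by `πS`. -/
def relabel {n m : ℕ} (πS : Equiv.Perm (Fin n)) (πC : Equiv.Perm (Fin m))
    (p : Profile n m) : Profile n m :=
  (fun i => πC.symm.trans (p.1 (πS.symm i)),
   fun j => πS.symm.trans (p.2 (πC.symm j)))

/-- Anonymity of a mechanism. -/
def Anonymous {n m : ℕ} (g : Profile n m → Fin n → Fin m → ℝ) : Prop :=
  ∀ p : Profile n m, ∀ πS : Equiv.Perm (Fin n), ∀ πC : Equiv.Perm (Fin m), ∀ s c,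
    g p s c = g (relabel πS πC p) (πS s) (πC c)

/-- The role-swapped profile `≻↔` (students and schools exchange roles). -/
def swapProfile {n : ℕ} (p : Profile n n) : Profile n n := (p.2, p.1)

/-- Symmetry of a mechanism (for balanced markets). -/
def SymmetricMech {n : ℕ} (g : Profile n n → Fin n → Fin n → ℝ) : Prop :=
  ∀ p : Profile n n, ∀ i j, g p i j = g (swapProfile p) j i

theorem convexOn_sum {𝕜 E β ι : Type*} [Semiring 𝕜] [PartialOrder 𝕜] [AddCommMonoid E]
    [AddCommMonoid β] [PartialOrder β] [IsOrderedAddMonoid β] [SMul 𝕜 E] [DistribMulAction 𝕜 β]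
    {s : Set E} {t : Finset ι} {f : ι → E → β} (hs : Convex 𝕜 s)
    (hf : ∀ i ∈ t, ConvexOn 𝕜 s (f i)) : ConvexOn 𝕜 s (fun x => ∑ i ∈ t, f i x) := by
  refine ⟨hs, fun x hx y hy a b ha hb hab => ?_⟩
  simp only [smul_sum, ← sum_add_distrib]
  exact sum_le_sum fun i hi => (hf i hi).2 hx hy ha hb hab

section Convexity

variable {n m : ℕ}

theorem convex_isRandMatching : Convex ℝ {r : Fin n → Fin m → ℝ | IsRandMatching r} := by
  rintro r ⟨r_nonneg, r_row, r_col⟩ r' ⟨r'_nonneg, r'_row, r'_col⟩ a b ha hb hab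
  refine ⟨fun s c => convex_Ici (0 : ℝ) (r_nonneg s c) (r'_nonneg s c) ha hb hab,
    fun s => ?_, fun c => ?_⟩
  all_goals simp only [Pi.add_apply, Pi.smul_apply, sum_add_distrib, ← smul_sum]
  · exact convex_Iic (1 : ℝ) (r_row s) (r'_row s) ha hb hab
  · exact convex_Iic (1 : ℝ) (r_col c) (r'_col c) ha hb hab

theorem convex_twoSidedSP :
    Convex ℝ {g : Profile n m → Fin n → Fin m → ℝ | TwoSidedSP g} := by
  rintro g ⟨g_student, g_school⟩ g' ⟨g'_student, g'_school⟩ a b ha hb -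
  refine ⟨fun p s q c => ?_, fun p c q s => ?_⟩
  all_goals simp only [Pi.add_apply, Pi.smul_apply, sum_add_distrib, ← smul_sum]
  · gcongr a • ?_ + b • ?_
    · exact g_student p s q c
    · exact g'_student p s q c
  · gcongr a • ?_ + b • ?_
    · exact g_school p c q s
    · exact g'_school p c q s

/-- The signed violation at the pair `(s, c)`: the violation of `r` at `p` is the sum over all
pairs of its positive part. -/
def signedViolation (p : Profile n m) (s : Fin n) (c : Fin m) (r : Fin n → Fin m → ℝ) : ℝ :=
  1 - r s c - ∑ c' with p.1 s c' < p.1 s c, r s c' - ∑ s' with p.2 c s' < p.2 c s, r s' c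

theorem violation_eq_sum_signedViolation (p : Profile n m) (r : Fin n → Fin m → ℝ) :
    violation p r = ∑ s, ∑ c, max (signedViolation p s c r) 0 :=
  rfl

theorem convexOn_signedViolation (p : Profile n m) (s : Fin n) (c : Fin m) :
    ConvexOn ℝ Set.univ (signedViolation p s c) := by
  refine ⟨convex_univ, fun r _ r' _ a b _ _ hab => le_of_eq ?_⟩
  simp only [signedViolation, Pi.add_apply, Pi.smul_apply, smul_eq_mul, sum_add_distrib,
    ← mul_sum]
  linear_combination -hab

theorem convexOn_violation (p : Profile n m) : ConvexOn ℝ Set.univ (violation p) := by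
  simp only [funext (violation_eq_sum_signedViolation p)]
  refine convexOn_sum convex_univ fun s _ => convexOn_sum convex_univ fun c _ => ?_
  exact (convexOn_signedViolation p s c).sup (convexOn_const 0 convex_univ)

/-- The total violation of a mechanism, which up to normalization is its expected violation at a
uniformly random profile. -/
def totalViolation (f : Profile n m → Fin n → Fin m → ℝ) : ℝ :=
  ∑ p, violation p (f p)

theorem convexOn_totalViolation :
    ConvexOn ℝ Set.univ (totalViolation : (Profile n m → Fin n → Fin m → ℝ) → ℝ) := by
  unfold totalViolation
  refine convexOn_sum convex_univ fun p _ => ?_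
  exact (convexOn_violation p).comp_linearMap
    (LinearMap.proj (φ := fun _ : Profile n m => Fin n → Fin m → ℝ) p)

end Convexity

section Mirror

variable {n : ℕ}

/-- The mirror image of a mechanism, which runs it on the role-swapped profile and transposes the
outcome; its fixed points are the symmetric mechanisms. -/
def mirror (f : Profile n n → Fin n → Fin n → ℝ) : Profile n n → Fin n → Fin n → ℝ :=
  fun p => Function.swap (f (swapProfile p))

theorem IsRandMatching.swap {n m : ℕ} {r : Fin n → Fin m → ℝ} (hr : IsRandMatching r) :
    IsRandMatching (Function.swap r) :=
  ⟨Function.swap hr.1, hr.2.2, hr.2.1⟩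

theorem TwoSidedSP.mirror {f : Profile n n → Fin n → Fin n → ℝ} (hf : TwoSidedSP f) :
    TwoSidedSP (mirror f) :=
  ⟨fun p => hf.2 (swapProfile p), fun p => hf.1 (swapProfile p)⟩

theorem symmetricMech_midpoint_mirror (f : Profile n n → Fin n → Fin n → ℝ) :
    SymmetricMech (midpoint ℝ f (mirror f)) :=
  fun p i j => midpoint_comm (R := ℝ) (f p i j) (f (swapProfile p) j i)

theorem signedViolation_swapProfile (p : Profile n n) (i j : Fin n) (r : Fin n → Fin n → ℝ) :
    signedViolation (swapProfile p) j i (Function.swap r) = signedViolation p i j r :=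
  sub_right_comm _ _ _

theorem violation_swapProfile (p : Profile n n) (r : Fin n → Fin n → ℝ) :
    violation (swapProfile p) (Function.swap r) = violation p r := by
  simp only [violation_eq_sum_signedViolation, signedViolation_swapProfile]
  exact sum_comm

theorem totalViolation_mirror (f : Profile n n → Fin n → Fin n → ℝ) :
    totalViolation (mirror f) = totalViolation f :=
  Fintype.sum_equiv (Equiv.prodComm _ _) _ _ fun p =>
    violation_swapProfile (swapProfile p) (f (swapProfile p))

theorem totalViolation_midpoint_mirror_le (f : Profile n n → Fin n → Fin n → ℝ) :
    totalViolation (midpoint ℝ f (mirror f)) ≤ totalViolation f :=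
  calc totalViolation (midpoint ℝ f (mirror f))
      ≤ max (totalViolation f) (totalViolation (mirror f)) :=
        convexOn_totalViolation.le_max_of_mem_segment (Set.mem_univ _) (Set.mem_univ _)
          (midpoint_mem_segment _ _)
    _ = totalViolation f := by rw [totalViolation_mirror, max_self]

end Mirror

/-- Theorem 2 (average-case): in a balanced market, for any two-sided strategy-proof
randomized matching mechanism `f` there is a two-sided strategy-proof and symmetric
randomized matching mechanism `g` whose total stability violation is no larger. -/
theorem symmetrization_average (n : ℕ) (f : Profile n n → Fin n → Fin n → ℝ)
    (hf : ∀ p, IsRandMatching (f p)) (hsp : TwoSidedSP f) :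
    ∃ g : Profile n n → Fin n → Fin n → ℝ,
      (∀ p, IsRandMatching (g p)) ∧ TwoSidedSP g ∧ SymmetricMech g ∧
      ∑ p : Profile n n, violation p (g p) ≤ ∑ p : Profile n n, violation p (f p) := by
  refine ⟨midpoint ℝ f (mirror f), fun p => ?_, ?_, ?_, ?_⟩
  · rw [pi_midpoint_apply]
    exact convex_isRandMatching.midpoint_mem (hf p) (hf (swapProfile p)).swap
  · exact convex_twoSidedSP.midpoint_mem hsp hsp.mirror
  · exact symmetricMech_midpoint_mirror f
  · exact totalViolation_midpoint_mirror_le f
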